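/- Let b₂⁺ = (3 + √3)/6 and suppose 1/2 ≤ a ≤ b₂⁺. Then ζ(σ, a) > 0 for every real σ with −2 < σ < −1. -/

import Mathlib

open HurwitzZeta Set

/-!
Write `P_k` for the 1-periodic Bernoulli function. The Taylor remainder
`E(t) = P_{k+1}(a - t) - P_{k+1}(a) + (k + 1) t P_k(a)` has, by the Fourier series of `P_{k+1}` and
`P_k`, an expansion in the functions `exp(-zt) - 1 + zt` with `z = 2πin`. For `-2 < re s < -1` the
Mellin transform of such a function is `Γ(s) z⁻ˢ`, so termwise integration and Hurwitz's formula
turn the Mellin transform of `E` into a multiple of `ζ(-s - k, a)`. For `k = 3` and `s = -3 - σ`,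
`ζ(σ, a) = -σ(σ + 1)(σ + 2)(σ + 3) / 24 · ∫₀^∞ t^(s - 1) E(t) dt`, where the polynomial factor
`σ(σ + 1)(σ + 2)(σ + 3)` is positive on `(-2, -1)`. Finally `E ≤ 0`: `B₂(a) ≤ 0` and
`B₃(a) ≤ 0` give this on the two pieces `[0, a]` and `[a, 1]` where `E` is a polynomial, and
`E(t + 1) - E(t) = 4 B₃(a) ≤ 0`.
-/

open Complex Filter Topology Asymptotics MeasureTheory
open scoped Nat Real

/-! ### The Mellin transform of `t ↦ exp (-zt) - 1 + zt` -/

theorem tendsto_cpow_mul_zero_of_isBigO {f : ℝ → ℂ} {l : Filter ℝ} {s : ℂ} {c : ℝ}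
    (hl : ∀ᶠ t in l, 0 < t) (hf : f =O[l] (· ^ (-c)))
    (h0 : Tendsto (fun t : ℝ ↦ t ^ (s.re - c)) l (𝓝 0)) :
    Tendsto (fun t : ℝ ↦ (t : ℂ) ^ s * f t) l (𝓝 0) := by
  have hpow : (fun t : ℝ ↦ (t : ℂ) ^ s) =O[l] (· ^ s.re) := by
    refine .of_bound' ?_
    filter_upwards [hl] with t ht
    rw [norm_cpow_eq_rpow_re_of_pos ht]
    exact le_abs_self _
  refine ((hpow.mul hf).congr' .rfl ?_).trans_tendsto h0
  filter_upwards [hl] with t ht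
  rw [← Real.rpow_add ht, sub_eq_add_neg]

theorem hasMellin_of_hasDerivAt {f f' : ℝ → ℂ} {s m : ℂ} {a b : ℝ} (hs : s ≠ 0)
    (hf : ∀ t ∈ Ioi (0 : ℝ), HasDerivAt f (f' t) t)
    (h_top : f =O[atTop] (· ^ (-a))) (hs_top : s.re < a)
    (h_bot : f =O[𝓝[>] 0] (· ^ (-b))) (hs_bot : b < s.re)
    (hf' : HasMellin f' (s + 1) (-s * m)) :
    HasMellin f s m := by
  have hconv : MellinConvergent f s := by
    refine mellinConvergent_of_isBigO_rpow ?_ h_top hs_top h_bot hs_bot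
    exact ContinuousOn.locallyIntegrableOn
      (fun t ht ↦ (hf t ht).continuousAt.continuousWithinAt) measurableSet_Ioi
  have hzero : Tendsto (fun t : ℝ ↦ (t : ℂ) ^ s * f t) (𝓝[>] 0) (𝓝 0) := by
    refine tendsto_cpow_mul_zero_of_isBigO self_mem_nhdsWithin h_bot ?_
    have := (Real.continuousAt_rpow_const 0 (s.re - b) (.inr (by linarith))).tendsto
    rw [Real.zero_rpow (by linarith)] at this
    exact this.mono_left nhdsWithin_le_nhds
  have htop : Tendsto (fun t : ℝ ↦ (t : ℂ) ^ s * f t) atTop (𝓝 0) := by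
    refine tendsto_cpow_mul_zero_of_isBigO (eventually_gt_atTop 0) h_top ?_
    simpa using tendsto_rpow_neg_atTop (sub_pos.2 hs_top)
  have hparts := integral_Ioi_mul_deriv_eq_deriv_mul
    (u := fun t : ℝ ↦ (t : ℂ) ^ s) (u' := fun t : ℝ ↦ s * (t : ℂ) ^ (s - 1))
    (fun t ht ↦ hasDerivAt_ofReal_cpow_const ht.ne' hs) hf
    (by simpa [MellinConvergent, Pi.mul_def] using hf'.1)
    (by simpa [MellinConvergent, Pi.mul_def, mul_assoc, IntegrableOn] using
      Integrable.const_mul hconv s) hzero htop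
  have hmellin : mellin f' (s + 1) = -s * mellin f s := by
    simpa [mellin, mul_assoc, integral_const_mul] using hparts
  exact ⟨hconv, mul_left_cancel₀ (neg_ne_zero.2 hs) (hmellin.symm.trans hf'.2)⟩

theorem isBigO_rpow_of_norm_le {f : ℝ → ℂ} {l : Filter ℝ} {C p : ℝ} (hl : ∀ᶠ t in l, 0 < t)
    (hf : ∀ t > 0, ‖f t‖ ≤ C * t ^ p) : f =O[l] (· ^ p) := by
  refine .of_bound C ?_
  filter_upwards [hl] with t ht
  rw [Real.norm_of_nonneg (by positivity)]
  exact hf t ht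

/-- The first-order Taylor remainder at `0` of `w ↦ exp (-w)`; for `0 ≤ re w` it is `O(|w|)` at
infinity and `O(|w| ^ 2)` at `0`, which is what the strip `-2 < re s < -1` needs. -/
noncomputable def expNegRemainder (w : ℂ) : ℂ := cexp (-w) - 1 + w

theorem hasDerivAt_expNegRemainder (w : ℂ) :
    HasDerivAt expNegRemainder (1 - cexp (-w)) w :=
  (((hasDerivAt_neg w).cexp.sub_const 1).add (hasDerivAt_id w)).congr_deriv (by ring)

theorem continuous_expNegRemainder : Continuous expNegRemainder :=
  continuous_iff_continuousAt.2 fun w ↦ (hasDerivAt_expNegRemainder w).continuousAt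

theorem norm_exp_neg_sub_one_le {w : ℂ} (hw : 0 ≤ w.re) :
    ‖cexp (-w) - 1‖ ≤ 2 * min 1 ‖w‖ := by
  rcases le_total ‖w‖ 1 with h | h
  · simpa [h] using norm_exp_sub_one_le (x := -w) (by simpa using h)
  · have hexp : ‖cexp (-w)‖ ≤ 1 := by simpa [norm_exp] using hw
    calc ‖cexp (-w) - 1‖ ≤ ‖cexp (-w)‖ + ‖(1 : ℂ)‖ := norm_sub_le _ _
      _ ≤ 2 * min 1 ‖w‖ := by rw [min_eq_left h, norm_one]; linarith

theorem norm_expNegRemainder_le {w : ℂ} (hw : 0 ≤ w.re) :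
    ‖expNegRemainder w‖ ≤ 3 * min ‖w‖ (‖w‖ ^ 2) := by
  rcases le_total ‖w‖ 1 with h | h
  · have hsq : ‖expNegRemainder w‖ ≤ ‖w‖ ^ 2 := by
      simpa [expNegRemainder] using norm_exp_sub_one_sub_id_le (x := -w) (by simpa using h)
    rw [min_eq_right (by nlinarith [norm_nonneg w])]
    linarith [sq_nonneg ‖w‖]
  · have hexp := norm_exp_neg_sub_one_le hw
    rw [min_eq_left h] at hexp
    rw [min_eq_left (by nlinarith)]
    calc ‖expNegRemainder w‖ ≤ ‖cexp (-w) - 1‖ + ‖w‖ := norm_add_le _ _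
      _ ≤ 3 * ‖w‖ := by linarith

theorem norm_expNegRemainder_mul_le {z : ℂ} {B t : ℝ} (hz : 0 ≤ z.re) (hB : ‖z‖ ≤ B)
    (ht : 0 < t) : ‖expNegRemainder (z * t)‖ ≤ 3 * min (B * t) ((B * t) ^ 2) := by
  have hzt : ‖z * t‖ ≤ B * t := by
    rw [norm_mul, norm_real, Real.norm_of_nonneg ht.le]
    gcongr
  refine (norm_expNegRemainder_le (by simpa using mul_nonneg hz ht.le)).trans ?_
  gcongr

theorem norm_one_sub_exp_neg_mul_mul_le {z : ℂ} {B t : ℝ} (hz : 0 ≤ z.re) (hzB : ‖z‖ ≤ B)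
    (hB : 1 ≤ B) (ht : 0 < t) :
    ‖(1 - cexp (-(z * t))) * t‖ ≤ 2 * min (B * t) ((B * t) ^ 2) := by
  have hzt : ‖z * t‖ ≤ B * t := by
    rw [norm_mul, norm_real, Real.norm_of_nonneg ht.le]
    gcongr
  calc ‖(1 - cexp (-(z * t))) * t‖ = ‖cexp (-(z * t)) - 1‖ * t := by
        rw [norm_mul, norm_sub_rev, norm_real, Real.norm_of_nonneg ht.le]
    _ ≤ 2 * min 1 (B * t) * (B * t) := by
        gcongr
        · exact (norm_exp_neg_sub_one_le (by simpa using mul_nonneg hz ht.le)).trans (by gcongr)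
        · exact le_mul_of_one_le_left ht.le hB
    _ = 2 * min (B * t) ((B * t) ^ 2) := by
        rw [mul_assoc, min_mul_of_nonneg _ _ (by positivity), one_mul, sq]

theorem integrableOn_rpow_mul_min {σ B : ℝ} (hσ : σ ∈ Ioo (-2) (-1)) (hB : 0 ≤ B) :
    IntegrableOn (fun t : ℝ ↦ t ^ (σ - 1) * min (B * t) ((B * t) ^ 2)) (Ioi 0) := by
  refine mellin_convergent_of_isBigO_scalar (a := -1) (b := -2) ?_ ?_ hσ.2 ?_ hσ.1
  · exact (by fun_prop : Continuous fun t : ℝ ↦ min (B * t) ((B * t) ^ 2)).continuousOn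
      |>.locallyIntegrableOn measurableSet_Ioi
  · refine .of_bound B ?_
    filter_upwards [eventually_gt_atTop 0] with t ht
    rw [neg_neg, Real.rpow_one, Real.norm_of_nonneg (by positivity), Real.norm_of_nonneg ht.le]
    exact min_le_left _ _
  · refine .of_bound (B ^ 2) ?_
    filter_upwards [self_mem_nhdsWithin] with t (ht : 0 < t)
    rw [neg_neg, Real.rpow_two, Real.norm_of_nonneg (by positivity),
      Real.norm_of_nonneg (by positivity), ← mul_pow]
    exact min_le_right _ _

theorem aestronglyMeasurable_cpow_smul {f : ℝ → ℂ} (hf : Continuous f) (s : ℂ) :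
    AEStronglyMeasurable (fun t : ℝ ↦ (t : ℂ) ^ (s - 1) • f t) (volume.restrict (Ioi 0)) := by
  have hpow : ContinuousOn (fun t : ℝ ↦ (t : ℂ) ^ (s - 1)) (Ioi 0) := fun t ht ↦
    (continuousAt_ofReal_cpow_const t _ (.inr (ne_of_gt ht))).continuousWithinAt
  exact (hpow.smul hf.continuousOn).aestronglyMeasurable measurableSet_Ioi

theorem norm_cpow_smul_expNegRemainder_le {z s : ℂ} {B t : ℝ} (hz : 0 ≤ z.re) (hB : ‖z‖ ≤ B)
    (ht : 0 < t) :
    ‖(t : ℂ) ^ (s - 1) • expNegRemainder (z * t)‖ ≤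
      3 * (t ^ (s.re - 1) * min (B * t) ((B * t) ^ 2)) := by
  rw [norm_smul, norm_cpow_eq_rpow_re_of_pos ht, sub_re, one_re, mul_left_comm]
  gcongr
  exact norm_expNegRemainder_mul_le hz hB ht

theorem mellinConvergent_expNegRemainder_mul {z s : ℂ} (hz : 0 ≤ z.re)
    (hs : s.re ∈ Ioo (-2) (-1)) :
    MellinConvergent (fun t : ℝ ↦ expNegRemainder (z * t)) s := by
  refine ((integrableOn_rpow_mul_min hs (norm_nonneg z)).const_mul 3).mono'
    (aestronglyMeasurable_cpow_smul (continuous_expNegRemainder.comp (by fun_prop)) s) ?_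
  filter_upwards [ae_restrict_mem measurableSet_Ioi] with t ht
  exact norm_cpow_smul_expNegRemainder_le hz le_rfl ht

theorem continuousOn_mellin_expNegRemainder_mul {s : ℂ} (hs : s.re ∈ Ioo (-2) (-1)) :
    ContinuousOn (fun z : ℂ ↦ mellin (fun t : ℝ ↦ expNegRemainder (z * t)) s)
      {z | 0 ≤ z.re} := by
  intro z _
  have hB : 0 ≤ ‖z‖ + 1 := by positivity
  refine continuousWithinAt_of_dominated (.of_forall fun w ↦ aestronglyMeasurable_cpow_smul
    (continuous_expNegRemainder.comp (by fun_prop)) s) ?_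
    ((integrableOn_rpow_mul_min hs hB).const_mul 3) (.of_forall fun t ↦ ?_)
  · filter_upwards [self_mem_nhdsWithin, nhdsWithin_le_nhds (Metric.ball_mem_nhds z one_pos)]
      with w hw hwz
    filter_upwards [ae_restrict_mem measurableSet_Ioi] with t ht
    exact norm_cpow_smul_expNegRemainder_le hw (norm_lt_of_mem_ball hwz).le ht
  · exact ((continuous_expNegRemainder.comp (continuous_mul_const (t : ℂ))).const_smul
      ((t : ℂ) ^ (s - 1))).continuousWithinAt

theorem differentiableOn_mellin_expNegRemainder_mul {s : ℂ} (hs : s.re ∈ Ioo (-2) (-1)) :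
    DifferentiableOn ℂ (fun z : ℂ ↦ mellin (fun t : ℝ ↦ expNegRemainder (z * t)) s)
      {z | 0 < z.re} := by
  intro z hz
  have hB : 0 ≤ ‖z‖ + 1 := by positivity
  have hopen : IsOpen {w : ℂ | 0 < w.re} := isOpen_lt continuous_const continuous_re
  refine (hasDerivAt_integral_of_dominated_loc_of_deriv_le
    (F := fun w (t : ℝ) ↦ (t : ℂ) ^ (s - 1) • expNegRemainder (w * t))
    (F' := fun w (t : ℝ) ↦ (t : ℂ) ^ (s - 1) • ((1 - cexp (-(w * t))) * t))
    (bound := fun t ↦ 2 * (t ^ (s.re - 1) * min ((‖z‖ + 1) * t) (((‖z‖ + 1) * t) ^ 2)))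
    (inter_mem (hopen.mem_nhds hz) (Metric.ball_mem_nhds z one_pos))
    (.of_forall fun w ↦ aestronglyMeasurable_cpow_smul
      (continuous_expNegRemainder.comp (by fun_prop)) s)
    (mellinConvergent_expNegRemainder_mul (le_of_lt hz) hs)
    (aestronglyMeasurable_cpow_smul (by fun_prop) s) ?_
    ((integrableOn_rpow_mul_min hs hB).const_mul 2)
    (.of_forall fun t w _ ↦ ?_)).2.differentiableAt.differentiableWithinAt
  · filter_upwards [ae_restrict_mem measurableSet_Ioi] with t (ht : 0 < t)
    rintro w ⟨hw : 0 < w.re, hwz⟩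
    rw [norm_smul, norm_cpow_eq_rpow_re_of_pos ht, sub_re, one_re, mul_left_comm]
    gcongr
    exact norm_one_sub_exp_neg_mul_mul_le hw.le (norm_lt_of_mem_ball hwz).le
      (le_add_of_nonneg_left (norm_nonneg z)) ht
  · exact ((hasDerivAt_expNegRemainder (w * t)).comp w (hasDerivAt_mul_const (t : ℂ))).const_smul
      ((t : ℂ) ^ (s - 1))

theorem hasMellin_exp_neg {s : ℂ} (hs : 0 < s.re) :
    HasMellin (fun t : ℝ ↦ cexp (-t)) s (Gamma s) := by
  refine ⟨?_, ?_⟩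
  · simpa [MellinConvergent, mul_comm] using GammaIntegral_convergent hs
  · simp [Gamma_eq_integral hs, GammaIntegral_eq_mellin]

theorem hasMellin_exp_neg_sub_one {s : ℂ} (hs : s.re ∈ Ioo (-1) 0) :
    HasMellin (fun t : ℝ ↦ cexp (-t) - 1) s (Gamma s) := by
  have hs0 : s ≠ 0 := by rintro rfl; simp at hs
  have hbound (t : ℝ) (ht : 0 < t) : ‖cexp (-t) - 1‖ ≤ 2 * min 1 t := by
    simpa [abs_of_pos ht] using norm_exp_neg_sub_one_le (w := t) (by simpa using ht.le)
  have hderiv (t : ℝ) : HasDerivAt (fun t : ℝ ↦ cexp (-t) - 1) (-cexp (-t)) t := by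
    simpa using (((hasDerivAt_neg (t : ℂ)).cexp.sub_const 1).comp_ofReal)
  have hexp := hasMellin_exp_neg (s := s + 1) (by simpa using neg_lt_iff_pos_add.1 hs.1)
  refine hasMellin_of_hasDerivAt (a := 0) (b := -1) hs0 (fun t _ ↦ hderiv t)
    (isBigO_rpow_of_norm_le (eventually_gt_atTop 0) (C := 2) fun t ht ↦ ?_) hs.2
    (isBigO_rpow_of_norm_le self_mem_nhdsWithin (C := 2) fun t ht ↦ ?_) hs.1 ?_
  · exact (hbound t ht).trans (by simp)
  · exact (hbound t ht).trans (by simp)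
  · simpa [Gamma_add_one s hs0, hexp.2] using hasMellin_const_smul hexp.1 (-1 : ℂ)

theorem hasMellin_expNegRemainder {s : ℂ} (hs : s.re ∈ Ioo (-2) (-1)) :
    HasMellin (fun t : ℝ ↦ expNegRemainder t) s (Gamma s) := by
  have hs0 : s ≠ 0 := by rintro rfl; norm_num at hs
  have hbound (t : ℝ) (ht : 0 < t) : ‖expNegRemainder t‖ ≤ 3 * min t (t ^ 2) := by
    simpa [abs_of_pos ht] using norm_expNegRemainder_le (w := t) (by simpa using ht.le)
  have hderiv (t : ℝ) : HasDerivAt (fun t : ℝ ↦ expNegRemainder t) (-(cexp (-t) - 1)) t :=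
    (hasDerivAt_expNegRemainder t).comp_ofReal.congr_deriv (by ring)
  have hexp := hasMellin_exp_neg_sub_one (s := s + 1)
    ⟨by rw [add_re, one_re]; linarith [hs.1], by rw [add_re, one_re]; linarith [hs.2]⟩
  refine hasMellin_of_hasDerivAt (a := -1) (b := -2) hs0 (fun t _ ↦ hderiv t)
    (isBigO_rpow_of_norm_le (eventually_gt_atTop 0) (C := 3) fun t ht ↦ ?_) hs.2
    (isBigO_rpow_of_norm_le self_mem_nhdsWithin (C := 3) fun t ht ↦ ?_) hs.1 ?_
  · exact (hbound t ht).trans (by simp)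
  · exact (hbound t ht).trans (by simp)
  · simpa [Gamma_add_one s hs0, hexp.2] using hasMellin_const_smul hexp.1 (-1 : ℂ)

theorem mellin_expNegRemainder_mul_of_re_pos {z s : ℂ} (hz : 0 < z.re)
    (hs : s.re ∈ Ioo (-2) (-1)) :
    mellin (fun t : ℝ ↦ expNegRemainder (z * t)) s = Gamma s * z ^ (-s) := by
  have hopen : IsOpen {w : ℂ | 0 < w.re} := isOpen_lt continuous_const continuous_re
  have hpow : DifferentiableOn ℂ (fun w : ℂ ↦ Gamma s * w ^ (-s)) {w | 0 < w.re} := fun w hw ↦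
    ((differentiableAt_id.cpow_const (.inl hw)).const_mul _).differentiableWithinAt
  -- Both sides are holomorphic in `z`, and rescaling `t` gives the identity for real `z`.
  refine ((differentiableOn_mellin_expNegRemainder_mul hs).analyticOnNhd hopen)
    |>.eqOn_of_preconnected_of_frequently_eq (hpow.analyticOnNhd hopen)
      (convex_halfSpace_re_gt 0).isPreconnected (z₀ := 1) (by simp) ?_ hz
  have hreal : ∀ᶠ r : ℝ in 𝓝[≠] 1,
      mellin (fun t : ℝ ↦ expNegRemainder (r * t)) s = Gamma s * (r : ℂ) ^ (-s) := by
    filter_upwards [nhdsWithin_le_nhds (lt_mem_nhds one_pos)] with r hr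
    have hscale := mellin_comp_mul_left (fun t : ℝ ↦ expNegRemainder t) s hr
    simp only [ofReal_mul, (hasMellin_expNegRemainder hs).2, smul_eq_mul] at hscale
    rw [hscale, mul_comm]
  have hofReal : Tendsto ((↑) : ℝ → ℂ) (𝓝[≠] 1) (𝓝[≠] 1) :=
    tendsto_nhdsWithin_iff.2 ⟨continuous_ofReal.continuousAt.tendsto.mono_left nhdsWithin_le_nhds,
      by filter_upwards [self_mem_nhdsWithin] with r hr using by simpa using hr⟩
  exact hofReal.frequently hreal.frequently

theorem mellin_expNegRemainder_mul {z s : ℂ} (hz : 0 ≤ z.re)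
    (hs : s.re ∈ Ioo (-2) (-1)) :
    mellin (fun t : ℝ ↦ expNegRemainder (z * t)) s = Gamma s * z ^ (-s) := by
  have hs0 : s ≠ 0 := by rintro rfl; norm_num at hs
  rcases eq_or_ne z 0 with rfl | hz0
  · simp [mellin, expNegRemainder, zero_cpow (neg_ne_zero.2 hs0)]
  -- Approach `z`, which may lie on the imaginary axis, from inside the right half-plane.
  have hshift : Tendsto (fun ε : ℝ ↦ z + ε) (𝓝[>] 0) (𝓝 z) := by
    have : Continuous fun ε : ℝ ↦ z + ε := by fun_prop
    simpa using (this.tendsto 0).mono_left nhdsWithin_le_nhds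
  have hpos : ∀ᶠ ε : ℝ in 𝓝[>] 0, 0 < (z + ε).re := by
    filter_upwards [self_mem_nhdsWithin] with ε (hε : 0 < ε)
    simpa using add_pos_of_nonneg_of_pos hz hε
  have hslit : z ∈ slitPlane := by
    rcases hz.lt_or_eq with h | h
    · exact .inl h
    · exact .inr fun him ↦ hz0 (Complex.ext h.symm him)
  have hleft := ((continuousOn_mellin_expNegRemainder_mul hs) z hz).tendsto.comp
    (tendsto_nhdsWithin_iff.2 ⟨hshift, hpos.mono fun _ h ↦ le_of_lt h⟩)
  have hright := ((continuousAt_cpow_const hslit (b := -s)).tendsto.const_mul (Gamma s)).comp hshift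
  refine tendsto_nhds_unique (hleft.congr' ?_) hright
  filter_upwards [hpos] with ε hε using mellin_expNegRemainder_mul_of_re_pos hε hs

theorem integral_rpow_mul_min {σ B : ℝ} (hσ : σ ≠ 0) (hB : 0 ≤ B) :
    ∫ t in Ioi (0 : ℝ), t ^ (σ - 1) * min (B * t) ((B * t) ^ 2) =
      B ^ (-σ) * ∫ t in Ioi (0 : ℝ), t ^ (σ - 1) * min t (t ^ 2) := by
  rcases hB.eq_or_lt with rfl | hB
  · simp [Real.zero_rpow (neg_ne_zero.2 hσ)]
  have hcancel : B ^ (1 - σ) * B ^ (σ - 1) = 1 := by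
    rw [← Real.rpow_add hB, sub_add_sub_cancel, sub_self, Real.rpow_zero]
  have hpow : B ^ (1 - σ) * B⁻¹ = B ^ (-σ) := by
    rw [← Real.rpow_neg_one, ← Real.rpow_add hB, ← sub_eq_add_neg,
      sub_sub_cancel_left]
  calc ∫ t in Ioi (0 : ℝ), t ^ (σ - 1) * min (B * t) ((B * t) ^ 2)
      = ∫ t in Ioi (0 : ℝ),
          B ^ (1 - σ) * ((B * t) ^ (σ - 1) * min (B * t) ((B * t) ^ 2)) := by
        refine setIntegral_congr_fun measurableSet_Ioi fun t (ht : 0 < t) ↦ ?_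
        simp only [Real.mul_rpow hB.le ht.le, ← mul_assoc, hcancel, one_mul]
    _ = B ^ (-σ) * ∫ t in Ioi (0 : ℝ), t ^ (σ - 1) * min t (t ^ 2) := by
        rw [integral_const_mul,
          integral_comp_mul_left_Ioi (fun t ↦ t ^ (σ - 1) * min t (t ^ 2)) 0 hB,
          mul_zero, smul_eq_mul, ← mul_assoc, hpow]

theorem hasSum_mellin_expNegRemainder {ι : Type*} [Countable ι] {c z : ι → ℂ} {F : ℝ → ℂ} {s : ℂ}
    (hz : ∀ i, 0 ≤ (z i).re) (hs : s.re ∈ Ioo (-2) (-1))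
    (hF : ∀ t ∈ Ioi (0 : ℝ), HasSum (fun i ↦ c i * expNegRemainder (z i * t)) (F t))
    (hc : Summable fun i ↦ ‖c i‖ * ‖z i‖ ^ (-s.re)) :
    HasSum (fun i ↦ Gamma s * (c i * z i ^ (-s))) (mellin F s) := by
  have hs0 : s.re ≠ 0 := (hs.2.trans (by norm_num)).ne
  have hnorm_le (i : ι) : ∫ t in Ioi (0 : ℝ), ‖(t : ℂ) ^ (s - 1) • expNegRemainder (z i * t)‖ ≤
      3 * (‖z i‖ ^ (-s.re) * ∫ t in Ioi (0 : ℝ), t ^ (s.re - 1) * min t (t ^ 2)) := by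
    rw [← integral_rpow_mul_min hs0 (norm_nonneg _), ← integral_const_mul]
    refine setIntegral_mono_on (mellinConvergent_expNegRemainder_mul (hz i) hs).norm
      ((integrableOn_rpow_mul_min hs (norm_nonneg _)).const_mul 3) measurableSet_Ioi fun t ht ↦ ?_
    exact norm_cpow_smul_expNegRemainder_le (hz i) le_rfl ht
  have hsummable : Summable fun i ↦
      ∫ t in Ioi (0 : ℝ), ‖(t : ℂ) ^ (s - 1) • (c i • expNegRemainder (z i * t))‖ := by
    refine .of_nonneg_of_le (fun i ↦ by positivity) (fun i ↦ ?_)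
      (hc.mul_right (3 * ∫ t in Ioi (0 : ℝ), t ^ (s.re - 1) * min t (t ^ 2)))
    simp only [smul_comm _ (c i), norm_smul (c i), integral_const_mul, mul_assoc]
    gcongr
    exact (hnorm_le i).trans_eq (by ring)
  have hsum := hasSum_integral_of_summable_integral_norm
    (fun i ↦ (mellinConvergent_expNegRemainder_mul (hz i) hs).const_smul (c i)) hsummable
  have hterm (i : ι) : mellin (fun t : ℝ ↦ c i • expNegRemainder (z i * t)) s =
      Gamma s * (c i * z i ^ (-s)) := by
    rw [mellin_const_smul, mellin_expNegRemainder_mul (hz i) hs, smul_eq_mul, mul_left_comm]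
  have hlimit : ∫ t in Ioi (0 : ℝ), ∑' i, (t : ℂ) ^ (s - 1) • (c i • expNegRemainder (z i * t)) =
      mellin F s :=
    setIntegral_congr_fun measurableSet_Ioi fun t ht ↦ by
      simp only [smul_eq_mul, tsum_mul_left, (hF t ht).tsum_eq]
  simp only [← hterm, ← hlimit]
  exact hsum

/-! ### Fourier series -/

theorem ofReal_mul_cpow {r : ℝ} (hr : 0 < r) {z : ℂ} (hz : z ≠ 0) (s : ℂ) :
    (r * z) ^ s = (r : ℂ) ^ s * z ^ s := by
  have hr0 : (r : ℂ) ≠ 0 := ofReal_ne_zero.2 hr.ne'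
  rw [cpow_def_of_ne_zero (mul_ne_zero hr0 hz), cpow_def_of_ne_zero hr0, cpow_def_of_ne_zero hz,
    log_ofReal_mul hr hz, ← ofReal_log hr.le, add_mul, exp_add]

theorem two_pi_mul_mul_natCast_cpow_neg {z : ℂ} (hz : z ≠ 0) {s : ℂ} (hs : s ≠ 0) (n : ℕ) :
    (2 * π * z * n) ^ (-s) = (2 * π) ^ (-s) * z ^ (-s) / n ^ s := by
  rcases n.eq_zero_or_pos with rfl | hn
  · simp [zero_cpow hs, zero_cpow (neg_ne_zero.2 hs)]
  · have hn' : (0 : ℝ) < n := mod_cast hn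
    have hsplit : (2 * π * z * n : ℂ) = ((2 * π : ℝ) : ℂ) * (((n : ℝ) : ℂ) * z) := by
      push_cast
      ring
    rw [hsplit, ofReal_mul_cpow Real.two_pi_pos (mul_ne_zero (ofReal_ne_zero.2 hn'.ne') hz),
      ofReal_mul_cpow hn' hz, ofReal_natCast, cpow_neg (n : ℂ)]
    push_cast
    ring

theorem hasSum_fourier_mul_cpow_neg {z : ℂ} (hz : z ≠ 0) {s : ℂ} (hs : 1 < s.re)
    (a : UnitAddCircle) :
    HasSum (fun n : ℕ ↦ fourier n a * (2 * π * z * n) ^ (-s))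
      ((2 * π) ^ (-s) * z ^ (-s) * expZeta a s) := by
  obtain ⟨x, rfl⟩ : ∃ x : ℝ, (x : UnitAddCircle) = a := QuotientAddGroup.mk_surjective a
  have hs0 : s ≠ 0 := by rintro rfl; norm_num at hs
  refine ((hasSum_expZeta_of_one_lt_re x hs).mul_left _).congr_fun fun n ↦ ?_
  rw [fourier_coe_apply, two_pi_mul_mul_natCast_cpow_neg hz hs0, Int.cast_natCast, ofReal_one,
    div_one, mul_right_comm _ (n : ℂ)]
  ring

-- The term `n = 0` is `0` because `0 ^ (-s) = 0`.
theorem hasSum_hurwitzZeta_one_sub {s : ℂ} (hs : 1 < s.re) (a : UnitAddCircle) :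
    HasSum (fun n : ℤ ↦ Gamma s * (fourier n a * (2 * π * I * n) ^ (-s)))
      (hurwitzZeta a (1 - s)) := by
  have hs0 : s ≠ 0 := by rintro rfl; norm_num at hs
  have hI : I ^ (-s) = cexp (-π * I * s / 2) := by
    rw [cpow_def_of_ne_zero I_ne_zero, log_I]
    ring_nf
  have hnegI : (-I) ^ (-s) = cexp (π * I * s / 2) := by
    rw [cpow_def_of_ne_zero (neg_ne_zero.2 I_ne_zero), log_neg_I]
    ring_nf
  have hpos : HasSum (fun n : ℕ ↦ fourier (n : ℤ) a * (2 * π * I * (n : ℤ)) ^ (-s))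
      ((2 * π) ^ (-s) * cexp (-π * I * s / 2) * expZeta a s) := by
    simpa only [hI, Int.cast_natCast] using hasSum_fourier_mul_cpow_neg I_ne_zero hs a
  have hneg : HasSum (fun n : ℕ ↦ fourier (-n : ℤ) a * (2 * π * I * (-n : ℤ)) ^ (-s))
      ((2 * π) ^ (-s) * cexp (π * I * s / 2) * expZeta (-a) s) := by
    simpa [hnegI, fourier_apply] using
      hasSum_fourier_mul_cpow_neg (neg_ne_zero.2 I_ne_zero) hs (-a)
  have hone : s ≠ 1 := by rintro rfl; norm_num at hs
  have hnat (n : ℕ) : s ≠ -n := by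
    rintro rfl
    simp only [neg_re, natCast_re] at hs
    linarith [n.cast_nonneg (α := ℝ)]
  have hsum := HasSum.of_nat_of_neg
    (f := fun n : ℤ ↦ fourier n a * (2 * π * I * n) ^ (-s)) hpos hneg
  rw [Int.cast_zero, mul_zero, zero_cpow (neg_ne_zero.2 hs0), mul_zero, sub_zero] at hsum
  rw [hurwitzZeta_one_sub a hnat (.inr hone), mul_comm _ (Gamma s), mul_assoc (Gamma s), mul_add,
    ← mul_assoc, ← mul_assoc]
  exact hsum.mul_left (Gamma s)

-- The term `n = 0` is `0` because division by zero gives `0`.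
theorem hasSum_periodizedBernoulli {k : ℕ} (hk : 2 ≤ k) (x : UnitAddCircle) :
    HasSum (fun n : ℤ ↦ -k ! / (2 * π * I * n) ^ k * fourier n x)
      (periodizedBernoulli k x : ℂ) := by
  let P : C(UnitAddCircle, ℂ) :=
    ⟨(↑) ∘ periodizedBernoulli k, continuous_ofReal.comp (periodizedBernoulli.continuous (by lia))⟩
  have hcoeff (n : ℤ) : fourierCoeff P n = -k ! / (2 * π * I * n) ^ k :=
    fourierCoeff_bernoulli_eq (by lia) n
  have hsummable : Summable (fourierCoeff P) := by
    simpa only [funext hcoeff] using summable_bernoulli_fourier hk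
  have hsum := has_pointwise_sum_fourier_series_of_summable hsummable x
  simp only [hcoeff, smul_eq_mul] at hsum
  exact hsum

/-- The first-order Taylor remainder `P_{k+1}(a - t) - P_{k+1}(a) + t P_{k+1}'(a)` of the
1-periodic Bernoulli function `P_{k+1}`, with its derivative written as `(k + 1) P_k`. -/
noncomputable def periodizedBernoulliRemainder (k : ℕ) (a : UnitAddCircle) (t : ℝ) : ℝ :=
  periodizedBernoulli (k + 1) (a - t) - periodizedBernoulli (k + 1) a +
    (k + 1) * t * periodizedBernoulli k a

theorem hasSum_periodizedBernoulliRemainder {k : ℕ} (hk : 2 ≤ k) (a : UnitAddCircle) (t : ℝ) :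
    HasSum (fun n : ℤ ↦ -(k + 1)! / (2 * π * I * n) ^ (k + 1) * fourier n a *
      expNegRemainder (2 * π * I * n * t)) (periodizedBernoulliRemainder k a t : ℂ) := by
  have hsum := ((hasSum_periodizedBernoulli (by lia : 2 ≤ k + 1) (a - t)).sub
    (hasSum_periodizedBernoulli (by lia : 2 ≤ k + 1) a)).add
      ((hasSum_periodizedBernoulli hk a).mul_left ((k + 1) * t : ℂ))
  have hshift (n : ℤ) :
      fourier n (a - (t : UnitAddCircle)) = fourier n a * cexp (-(2 * π * I * n * t)) := by
    obtain ⟨x, rfl⟩ : ∃ x : ℝ, (x : UnitAddCircle) = a := QuotientAddGroup.mk_surjective a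
    rw [← AddCircle.coe_sub, fourier_coe_apply, fourier_coe_apply, ← exp_add]
    push_cast
    ring_nf
  have hvalue : (periodizedBernoulliRemainder k a t : ℂ) =
      periodizedBernoulli (k + 1) (a - t) - periodizedBernoulli (k + 1) a +
        (k + 1) * t * periodizedBernoulli k a := by
    simp [periodizedBernoulliRemainder]
  rw [hvalue]
  refine hsum.congr_fun fun n ↦ ?_
  rcases eq_or_ne n 0 with rfl | hn
  · simp [zero_pow (by lia : k ≠ 0)]
  · have hz : 2 * π * I * n ≠ 0 := by simp [hn]
    simp only [hshift, expNegRemainder, Nat.factorial_succ]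
    push_cast
    field_simp
    ring

theorem summable_norm_mul_fourier {k : ℕ} {σ : ℝ} (hσ : -σ < k) (a : UnitAddCircle) :
    Summable fun n : ℤ ↦ ‖-(k + 1)! / (2 * π * I * n : ℂ) ^ (k + 1) * fourier n a‖ *
      ‖(2 * π * I * n : ℂ)‖ ^ (-σ) := by
  refine ((Real.summable_abs_int_rpow (b := k + 1 + σ) (by linarith)).mul_left
    ((k + 1)! * (2 * π) ^ (-(k + 1 + σ)))).congr fun n ↦ ?_
  have hnorm : ‖(2 * π * I * n : ℂ)‖ = 2 * π * |(n : ℝ)| := by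
    simp [abs_of_pos Real.pi_pos]
  have hfourier : ‖fourier n a‖ = 1 := Circle.norm_coe _
  rw [norm_mul, hfourier, norm_div, norm_neg, norm_natCast, norm_pow, hnorm, mul_one]
  rcases eq_or_ne n 0 with rfl | hn
  · rw [Int.cast_zero, abs_zero, Real.zero_rpow (by linarith)]
    simp
  · have hpos : 0 < |(n : ℝ)| := by positivity
    have hadd : -(k + 1 + σ) = -((k + 1 : ℕ) : ℝ) + -σ := by
      push_cast
      ring
    rw [mul_assoc, ← Real.mul_rpow (by positivity) hpos.le, hadd, Real.rpow_add (by positivity),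
      Real.rpow_neg (by positivity), Real.rpow_natCast]
    ring

theorem ne_neg_natCast_of_re_mem_Ioo {s : ℂ} (hs : s.re ∈ Ioo (-2) (-1)) (m : ℕ) : s ≠ -m := by
  rintro rfl
  obtain ⟨h2, h1⟩ : m < 2 ∧ 1 < m := by simpa using hs
  lia

theorem hurwitzZeta_eq_mellin_periodizedBernoulliRemainder {k : ℕ} (hk : 2 ≤ k)
    (a : UnitAddCircle) {s : ℂ} (hs : s.re ∈ Ioo (-2) (-1)) :
    hurwitzZeta a (-s - k) = -((ascPochhammer ℂ (k + 1)).eval s / (k + 1)!) *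
      mellin (fun t ↦ (periodizedBernoulliRemainder k a t : ℂ)) s := by
  have hk' : (2 : ℝ) ≤ k := mod_cast hk
  have hnotnat := ne_neg_natCast_of_re_mem_Ioo hs
  have hmellin := hasSum_mellin_expNegRemainder
    (c := fun n : ℤ ↦ -(k + 1)! / (2 * π * I * n) ^ (k + 1) * fourier n a)
    (z := fun n : ℤ ↦ 2 * π * I * n) (fun n ↦ by simp) hs
    (fun t _ ↦ hasSum_periodizedBernoulliRemainder hk a t)
    (summable_norm_mul_fourier (by linarith [hs.1]) a)
  have hzeta := hasSum_hurwitzZeta_one_sub (s := s + k + 1)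
    (by simp only [add_re, natCast_re, one_re]; linarith [hs.1]) a
  have hterm (z : ℂ) : z ^ (-(s + k + 1)) = z ^ (-s) / z ^ (k + 1) := by
    rcases eq_or_ne z 0 with rfl | hz
    · have : s + k + 1 ≠ 0 := fun h ↦ hnotnat (k + 1) (by push_cast; linear_combination h)
      rw [zero_cpow (neg_ne_zero.2 this), zero_pow k.succ_ne_zero, div_zero]
    · rw [show -(s + k + 1) = -s - (k + 1 : ℕ) by push_cast; ring, cpow_sub _ _ hz,
        cpow_natCast]
  rw [show -s - (k : ℂ) = 1 - (s + k + 1) by ring]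
  refine hzeta.unique ((hmellin.mul_left _).congr_fun fun n ↦ ?_)
  have hpochhammer := Gamma_add_nat_div_Gamma_eq (n := k + 1) s hnotnat
  have hfact : ((k + 1)! : ℂ) ≠ 0 := Nat.cast_ne_zero.2 (Nat.factorial_ne_zero _)
  rw [hterm, ← hpochhammer, Nat.cast_add_one, ← add_assoc]
  have hΓ := Gamma_ne_zero hnotnat
  field_simp

/-! ### The sign of the remainder for `k = 3` -/

theorem bernoulliFun_eq_sum (k : ℕ) (x : ℝ) :
    bernoulliFun k x = ∑ i ∈ Finset.range (k + 1), bernoulli i * k.choose i * x ^ (k - i) := by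
  simp [bernoulliFun, Polynomial.bernoulli]

theorem bernoulliFun_three (x : ℝ) : bernoulliFun 3 x = x * (x - 1 / 2) * (x - 1) := by
  simp only [bernoulliFun_eq_sum, Finset.sum_range_succ, Finset.sum_range_zero, Nat.choose,
    bernoulli, bernoulli'_zero, bernoulli'_one, bernoulli'_two, bernoulli'_three]
  push_cast
  ring

theorem bernoulliFun_four (x : ℝ) : bernoulliFun 4 x = x ^ 2 * (1 - x) ^ 2 - 1 / 30 := by
  simp only [bernoulliFun_eq_sum, Finset.sum_range_succ, Finset.sum_range_zero, Nat.choose,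
    bernoulli, bernoulli'_zero, bernoulli'_one, bernoulli'_two, bernoulli'_three, bernoulli'_four]
  push_cast
  ring

theorem lt_one_of_bernoulliFun_two_nonpos {x : ℝ} (hx : bernoulliFun 2 x ≤ 0) : x < 1 := by
  rw [bernoulliFun_two] at hx
  nlinarith

theorem bernoulliFun_three_nonpos {x : ℝ} (hx : x ∈ Icc (1 / 2) 1) : bernoulliFun 3 x ≤ 0 := by
  rw [bernoulliFun_three]
  exact mul_nonpos_of_nonneg_of_nonpos
    (mul_nonneg (by linarith [hx.1]) (by linarith [hx.1])) (by linarith [hx.2])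

theorem periodizedBernoulli_coe {x : ℝ} (hx : x ∈ Ico 0 1) (k : ℕ) :
    periodizedBernoulli k (x : UnitAddCircle) = bernoulliFun k x :=
  AddCircle.liftIco_coe_apply (by simpa using hx)

theorem continuous_periodizedBernoulliRemainder {k : ℕ} (hk : 1 ≤ k) (a : UnitAddCircle) :
    Continuous (periodizedBernoulliRemainder k a) := by
  have hP := periodizedBernoulli.continuous (k := k + 1) (by lia)
  have hsub : Continuous fun t : ℝ ↦ a - (t : UnitAddCircle) :=
    continuous_const.sub (AddCircle.continuous_mk' 1)
  unfold periodizedBernoulliRemainder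
  exact ((hP.comp hsub).sub continuous_const).add (by fun_prop)

theorem periodizedBernoulliRemainder_add_natCast (k : ℕ) (a : UnitAddCircle) (t : ℝ) (n : ℕ) :
    periodizedBernoulliRemainder k a (t + n) =
      periodizedBernoulliRemainder k a t + (k + 1) * n * periodizedBernoulli k a := by
  have hn : ((n : ℝ) : UnitAddCircle) = 0 := (AddCircle.coe_eq_zero_iff 1).2 ⟨n, by simp⟩
  simp only [periodizedBernoulliRemainder, AddCircle.coe_add, hn, add_zero]
  ring

theorem isBigO_periodizedBernoulliRemainder_atTop {k : ℕ} (hk : 1 ≤ k) (a : UnitAddCircle) :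
    periodizedBernoulliRemainder k a =O[atTop] (fun t : ℝ ↦ t) := by
  obtain ⟨C, hC⟩ := isCompact_univ.exists_bound_of_continuousOn
    (periodizedBernoulli.continuous (k := k + 1) (by lia)).continuousOn
  have hconst (c : ℝ) : (fun _ : ℝ ↦ c) =O[atTop] (fun t : ℝ ↦ t) :=
    (isLittleO_const_id_atTop c).isBigO
  have hP : (fun t : ℝ ↦ periodizedBernoulli (k + 1) (a - t)) =O[atTop] (fun _ ↦ C) :=
    .of_norm_le fun t ↦ hC _ (mem_univ _)
  refine ((hP.trans (hconst C)).sub (hconst _)).add ?_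
  simpa only [mul_right_comm] using (isBigO_refl (fun t : ℝ ↦ t) atTop).const_mul_left
    ((k + 1) * periodizedBernoulli k a)

section Sign

variable {a t : ℝ}

theorem periodizedBernoulliRemainder_three_of_le (ha : a < 1) (ht : t ∈ Icc 0 a) :
    periodizedBernoulliRemainder 3 a t =
      t ^ 2 * (6 * bernoulliFun 2 a - 4 * bernoulliFun 1 a * t + t ^ 2) := by
  have ha0 := ht.1.trans ht.2
  rw [periodizedBernoulliRemainder, ← AddCircle.coe_sub,
    periodizedBernoulli_coe ⟨ha0, ha⟩, periodizedBernoulli_coe ⟨ha0, ha⟩,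
    periodizedBernoulli_coe ⟨sub_nonneg.2 ht.2, by linarith [ht.1]⟩]
  simp only [Nat.reduceAdd, bernoulliFun_one, bernoulliFun_two, bernoulliFun_three,
    bernoulliFun_four]
  push_cast
  ring

theorem periodizedBernoulliRemainder_three_one_sub (ha : 0 ≤ a) (ht : t ∈ Ico 0 (1 - a)) :
    periodizedBernoulliRemainder 3 a (1 - t) =
      t ^ 2 * (6 * bernoulliFun 2 a + 4 * bernoulliFun 1 a * t + t ^ 2) +
        4 * bernoulliFun 3 a := by
  have hshift : (a : UnitAddCircle) - ((1 - t : ℝ) : UnitAddCircle) = (a + t : ℝ) := by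
    rw [AddCircle.coe_sub, AddCircle.coe_period, zero_sub, sub_neg_eq_add, AddCircle.coe_add]
  have ha1 : a < 1 := by linarith [ht.1, ht.2]
  rw [periodizedBernoulliRemainder, hshift,
    periodizedBernoulli_coe ⟨ha, ha1⟩, periodizedBernoulli_coe ⟨ha, ha1⟩,
    periodizedBernoulli_coe ⟨add_nonneg ha ht.1, by linarith [ht.2]⟩]
  simp only [Nat.reduceAdd, bernoulliFun_one, bernoulliFun_two, bernoulliFun_three,
    bernoulliFun_four]
  push_cast
  ring

theorem periodizedBernoulliRemainder_three_neg (ha : 1 / 2 ≤ a) (hB₂ : bernoulliFun 2 a ≤ 0)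
    (ht : t ∈ Ioc 0 a) : periodizedBernoulliRemainder 3 a t < 0 := by
  have ha1 := lt_one_of_bernoulliFun_two_nonpos hB₂
  rw [periodizedBernoulliRemainder_three_of_le ha1 (Ioc_subset_Icc_self ht)]
  refine mul_neg_of_pos_of_neg (pow_pos ht.1 2) ?_
  -- The quadratic factor is convex in `t`: it suffices that it is `≤ 0` at `0` and `< 0` at `a`.
  have hend : 6 * bernoulliFun 2 a - 4 * bernoulliFun 1 a * a + a ^ 2 < 0 := by
    rw [bernoulliFun_one, bernoulliFun_two]
    nlinarith
  have hat : 0 ≤ a - t := sub_nonneg.2 ht.2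
  have ha0 : 0 < a := ht.1.trans_le ht.2
  refine neg_of_mul_neg_left ?_ ha0.le
  calc (6 * bernoulliFun 2 a - 4 * bernoulliFun 1 a * t + t ^ 2) * a
      = (a - t) * (6 * bernoulliFun 2 a) +
          t * (6 * bernoulliFun 2 a - 4 * bernoulliFun 1 a * a + a ^ 2) - a * t * (a - t) := by ring
    _ < 0 := by
      linarith [mul_nonpos_of_nonneg_of_nonpos hat hB₂, mul_neg_of_pos_of_neg ht.1 hend,
        mul_nonneg (mul_pos ha0 ht.1).le hat]

theorem periodizedBernoulliRemainder_three_one_sub_nonpos (ha : 1 / 2 ≤ a)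
    (hB₂ : bernoulliFun 2 a ≤ 0) (ht : t ∈ Ico 0 (1 - a)) :
    periodizedBernoulliRemainder 3 a (1 - t) ≤ 0 := by
  have ha1 := lt_one_of_bernoulliFun_two_nonpos hB₂
  have hB₃ := bernoulliFun_three_nonpos ⟨ha, ha1.le⟩
  rw [periodizedBernoulliRemainder_three_one_sub (by linarith) ht]
  have hfactor : 6 * bernoulliFun 2 a + 4 * bernoulliFun 1 a * t + t ^ 2 ≤ a * (3 * a - 2) := by
    rw [bernoulliFun_one, bernoulliFun_two]
    nlinarith [ht.1, ht.2]
  rcases le_total (a * (3 * a - 2)) 0 with h | h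
  · linarith [mul_nonpos_of_nonneg_of_nonpos (sq_nonneg t) (hfactor.trans h)]
  · calc t ^ 2 * (6 * bernoulliFun 2 a + 4 * bernoulliFun 1 a * t + t ^ 2) + 4 * bernoulliFun 3 a
        ≤ (1 - a) ^ 2 * (a * (3 * a - 2)) + 4 * bernoulliFun 3 a := by
          gcongr ?_ + _
          exact mul_le_mul_of_nonneg (pow_le_pow_left₀ ht.1 ht.2.le 2) hfactor (sq_nonneg t) h
      _ = -(a ^ 2 * ((1 - a) * (3 * a - 1))) := by
          rw [bernoulliFun_three]
          ring
      _ ≤ 0 := neg_nonpos.2 <| mul_nonneg (sq_nonneg a) <|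
          mul_nonneg (by linarith) (by linarith)

theorem periodizedBernoulliRemainder_three_nonpos_of_lt_one (ha : 1 / 2 ≤ a)
    (hB₂ : bernoulliFun 2 a ≤ 0) (ht : t ∈ Ico 0 1) :
    periodizedBernoulliRemainder 3 a t ≤ 0 := by
  rcases ht.1.eq_or_lt with rfl | ht0
  · simp [periodizedBernoulliRemainder]
  rcases le_or_gt t a with hta | hta
  · exact (periodizedBernoulliRemainder_three_neg ha hB₂ ⟨ht0, hta⟩).le
  · simpa only [sub_sub_cancel] using periodizedBernoulliRemainder_three_one_sub_nonpos ha hB₂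
      (t := 1 - t) ⟨by linarith [ht.2], by linarith⟩

theorem periodizedBernoulliRemainder_three_nonpos (ha : 1 / 2 ≤ a) (hB₂ : bernoulliFun 2 a ≤ 0)
    (ht : 0 ≤ t) : periodizedBernoulliRemainder 3 a t ≤ 0 := by
  have ha1 := lt_one_of_bernoulliFun_two_nonpos hB₂
  have hB₃ : periodizedBernoulli 3 (a : UnitAddCircle) ≤ 0 := by
    rw [periodizedBernoulli_coe ⟨by linarith, ha1⟩]
    exact bernoulliFun_three_nonpos ⟨ha, ha1.le⟩
  rw [← Int.fract_add_floor t, ← natCast_floor_eq_intCast_floor ht,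
    periodizedBernoulliRemainder_add_natCast]
  exact add_nonpos (periodizedBernoulliRemainder_three_nonpos_of_lt_one ha hB₂
      ⟨Int.fract_nonneg t, Int.fract_lt_one t⟩)
    (mul_nonpos_of_nonneg_of_nonpos (by positivity) hB₃)

theorem integrableOn_rpow_mul_periodizedBernoulliRemainder_three (ha : a ∈ Ioo 0 1) {σ : ℝ}
    (hσ : σ ∈ Ioo (-2) (-1)) :
    IntegrableOn (fun t : ℝ ↦ t ^ (σ - 1) * periodizedBernoulliRemainder 3 a t) (Ioi 0) := by
  refine mellin_convergent_of_isBigO_scalar (a := -1) (b := -2)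
    ((continuous_periodizedBernoulliRemainder (by lia) _).continuousOn.locallyIntegrableOn
      measurableSet_Ioi) ?_ hσ.2 ?_ hσ.1
  · simpa using isBigO_periodizedBernoulliRemainder_atTop (k := 3) (by lia) a
  · have hfactor : (fun t : ℝ ↦ 6 * bernoulliFun 2 a - 4 * bernoulliFun 1 a * t + t ^ 2)
        =O[𝓝[>] 0] (fun _ ↦ (1 : ℝ)) :=
      (Continuous.tendsto (by fun_prop) 0 |>.mono_left nhdsWithin_le_nhds).isBigO_one ℝ
    refine ((isBigO_refl (fun t : ℝ ↦ t ^ 2) (𝓝[>] 0)).mul hfactor).congr' ?_ ?_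
    · filter_upwards [Ioc_mem_nhdsGT ha.1] with t ht
      rw [periodizedBernoulliRemainder_three_of_le ha.2 (Ioc_subset_Icc_self ht)]
    · exact .of_forall fun t ↦ by simp

theorem integral_rpow_mul_periodizedBernoulliRemainder_three_neg (ha : 1 / 2 ≤ a)
    (hB₂ : bernoulliFun 2 a ≤ 0) {σ : ℝ} (hσ : σ ∈ Ioo (-2) (-1)) :
    ∫ t in Ioi (0 : ℝ), t ^ (σ - 1) * periodizedBernoulliRemainder 3 a t < 0 := by
  have ha1 := lt_one_of_bernoulliFun_two_nonpos hB₂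
  have hint := integrableOn_rpow_mul_periodizedBernoulliRemainder_three
    (a := a) ⟨by linarith, ha1⟩ hσ
  have hnonneg : ∀ t ∈ Ioi (0 : ℝ), 0 ≤ -(t ^ (σ - 1) * periodizedBernoulliRemainder 3 a t) :=
    fun t ht ↦ neg_nonneg.2 <| mul_nonpos_of_nonneg_of_nonpos (Real.rpow_nonneg (le_of_lt ht) _)
      (periodizedBernoulliRemainder_three_nonpos ha hB₂ (le_of_lt ht))
  rw [← neg_pos, ← integral_neg, setIntegral_pos_iff_support_of_nonneg_ae
    ((ae_restrict_mem measurableSet_Ioi).mono hnonneg) hint.neg]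
  refine lt_of_lt_of_le ?_ (measure_mono (s := Ioc 0 a) fun t ht ↦ ⟨?_, ht.1⟩)
  · rw [Real.volume_Ioc, sub_zero, ENNReal.ofReal_pos]
    linarith
  · exact neg_ne_zero.2 (mul_neg_of_pos_of_neg (Real.rpow_pos_of_pos ht.1 _)
      (periodizedBernoulliRemainder_three_neg ha hB₂ ht)).ne

end Sign

theorem mellin_ofReal (f : ℝ → ℝ) (σ : ℝ) :
    mellin (fun t ↦ (f t : ℂ)) σ = (∫ t in Ioi (0 : ℝ), t ^ (σ - 1) * f t : ℝ) := by
  refine .trans (setIntegral_congr_fun measurableSet_Ioi fun t (ht : 0 < t) ↦ ?_)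
    integral_ofReal
  simp [ofReal_cpow ht.le]

theorem hurwitzZeta_ofReal_eq_integral (a : UnitAddCircle) {σ : ℝ} (hσ : σ ∈ Ioo (-2) (-1)) :
    hurwitzZeta a σ = (-(σ * (σ + 1) * (σ + 2) * (σ + 3) / 24) *
      ∫ t in Ioi (0 : ℝ), t ^ (-3 - σ - 1) * periodizedBernoulliRemainder 3 a t : ℝ) := by
  have hzeta := hurwitzZeta_eq_mellin_periodizedBernoulliRemainder (k := 3) (by lia) a
    (s := (-3 - σ : ℝ)) ⟨by rw [ofReal_re]; linarith [hσ.2], by rw [ofReal_re]; linarith [hσ.1]⟩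
  have harg : -((-3 - σ : ℝ) : ℂ) - (3 : ℕ) = σ := by
    push_cast
    ring
  rw [harg, mellin_ofReal] at hzeta
  rw [hzeta]
  simp only [ascPochhammer_succ_eval, ascPochhammer_zero, Polynomial.eval_one, Nat.factorial]
  push_cast
  ring

/-- If `1/2 ≤ a ≤ (3 + √3)/6`, then `ζ(σ, a) > 0` for every real `σ ∈ (-2, -1)`. -/
theorem hurwitzZeta_pos_on_Ioo_neg_two_neg_one (a : ℝ) (ha : 1 / 2 ≤ a)
    (ha' : a ≤ (3 + Real.sqrt 3) / 6) :
    ∀ σ : ℝ, -2 < σ → σ < -1 →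
      (hurwitzZeta (a : UnitAddCircle) (σ : ℂ)).im = 0 ∧
        0 < (hurwitzZeta (a : UnitAddCircle) (σ : ℂ)).re := by
  intro σ hσ hσ'
  have hB₂ : bernoulliFun 2 a ≤ 0 := by
    rw [bernoulliFun_two]
    have hsq : (6 * a - 3) ^ 2 ≤ 3 := (Real.le_sqrt (by linarith) (by norm_num)).1 (by linarith)
    linarith
  have hneg := integral_rpow_mul_periodizedBernoulliRemainder_three_neg ha hB₂
    (σ := -3 - σ) ⟨by linarith, by linarith⟩
  have hcoeff : 0 < σ * (σ + 1) * (σ + 2) * (σ + 3) / 24 := by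
    have := mul_pos_of_neg_of_neg (by linarith : σ < 0) (by linarith : σ + 1 < 0)
    have : 0 < σ + 2 := by linarith
    have : 0 < σ + 3 := by linarith
    positivity
  rw [hurwitzZeta_ofReal_eq_integral a ⟨hσ, hσ'⟩, ofReal_im, ofReal_re]
  exact ⟨rfl, mul_pos_of_neg_of_neg (neg_neg_of_pos hcoeff) hneg⟩
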